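/- Assume the bootstrap setup with parameters ε₀ ∈ (0,1), 0 < K₀ < K₁, β ∈ (0,1), κ > 1 satisfying the three conditions: ε₀ ≤ κ ε₀^{1/β}, ε₀^{1−β} ≤ 1/2, and 2K₁/(K₀ c_β β) < log(κ)/κ, where c_β = β(β+1)/((2β+1)(1−β)). Let φ ∈ C¹(ℝ⁺ × [0,T)) be a solution of the flow-map equation with data φ₀ ≡ ε₀ and g, with inf_{(x,t) ∈ ℝ⁺×[0,T']} φ(x,t) > 0 for every T' < T. Then ε'(t) ≤ −(ε₀² K₀ c_β / (2κ)) ε(t)^β for all t ∈ [0,T), where ε(t) = φ(0,t); consequently T is finite with T ≤ 2κ / ((1−β) K₀ c_β ε₀^{1+β}). -/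

import Mathlib

/-!
Write `ε(t) = φ(0,t)`, `l(t) = ε(t)^β` and `A = ε₀² K₀ c_β / (2κ)`. Since `g' ≤ 0`, the growth rate
`∫_x^∞ g'/Φ` of `log φ(x,·)` is nonpositive and nondecreasing in `x`; hence `φ` is nonincreasing in
time and, starting from a constant, nondecreasing in space.

If the bootstrap property `φ(l(s),s) ≤ κ ε(s)` holds for `s ≤ t`, then decay in time turns it into
the envelope `φ(z,t) ≤ κ z^{1/β}` for `z ≥ l(t)` (`FlowSetting.envelope`). Then
`Φ(z,t) ≤ κ z^{1+1/β}` there, and integrating `g'/Φ` over `[l(t), 1]` gives `ε' ≤ -A ε^β`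
(`FlowSetting.drift_le`). Conversely `Φ(z,t) ≥ z ε(t)` bounds the growth of `log (φ(x,t)/ε(t))` by
`ε₀² K₁ x / ε(t)`, which the differential inequality dominates by the derivative of
`(ε₀² K₁ / (A β)) x ε(t)^{-β}`. At `x = l(t)` this yields
`log (φ(l(t),t)/ε(t)) ≤ ε₀² K₁ / (A β) < log κ`, a strict improvement of the bootstrap property,
which therefore never fails (`FlowSetting.bootstrap`). Finally `ε^{1-β} + (1-β) A t` is
nonincreasing while `ε > 0`, which bounds `T`.
-/

open Set MeasureTheory Filter Topology

noncomputable def gD (g : ℝ → ℝ) (z : ℝ) : ℝ := derivWithin g (Set.Ici 0) z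

noncomputable def Phi (φ : ℝ → ℝ → ℝ) (z t : ℝ) : ℝ := ∫ σ in (0:ℝ)..z, φ σ t

/-- Admissible data for the flow-map equation: `φ₀ ∈ C¹(ℝ⁺)`, `g ∈ C²(ℝ⁺)` with
compact support in `ℝ⁺`, `inf φ₀ > 0` and `g'(0) = 0`. -/
def AdmissibleData (φ₀ g : ℝ → ℝ) : Prop :=
  ContDiffOn ℝ 1 φ₀ (Set.Ici 0) ∧
  ContDiffOn ℝ 2 g (Set.Ici 0) ∧
  (∃ a : ℝ, ∀ z ≥ a, g z = 0) ∧
  (∃ m : ℝ, 0 < m ∧ ∀ x ≥ (0:ℝ), m ≤ φ₀ x) ∧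
  gD g 0 = 0

/-- `φ` is a `C¹(ℝ⁺ × I)` solution of the flow-map equation
`∂ₜφ(x,t) = φ(x,t) ∫_x^∞ g'(z)/Φ(z,t) dz`, `φ(x,0) = φ₀(x)`. -/
def IsFlowMapSolution (φ₀ g : ℝ → ℝ) (φ : ℝ → ℝ → ℝ) (I : Set ℝ) : Prop :=
  ContDiffOn ℝ 1 (fun p : ℝ × ℝ => φ p.1 p.2) (Set.Ici 0 ×ˢ I) ∧
  (∀ x ≥ (0:ℝ), φ x 0 = φ₀ x) ∧
  (∀ x ≥ (0:ℝ), ∀ t ∈ I,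
    HasDerivWithinAt (fun s => φ x s)
      (φ x t * ∫ z in Set.Ioi x, gD g z / Phi φ z t) I t)

/-- `inf_{(x,t) ∈ ℝ⁺ × I} φ(x,t) > 0`. -/
def PosInfOn (φ : ℝ → ℝ → ℝ) (I : Set ℝ) : Prop :=
  ∃ m : ℝ, 0 < m ∧ ∀ x ≥ (0:ℝ), ∀ t ∈ I, m ≤ φ x t
/-- The constant `c_β = β(β+1)/((2β+1)(1−β))`. -/
noncomputable def cBeta (β : ℝ) : ℝ := β * (β + 1) / ((2 * β + 1) * (1 - β))

/-- The bootstrap setup: data `φ₀ ≡ ε₀ ∈ (0,1)`, `g ∈ C²(ℝ⁺)` compactly supported with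
`g'(0) = 0`, `g' ≤ 0` on `ℝ⁺`, and constants `0 < K₀ < K₁` with
`ε₀² K₀ z ≤ −g'(z) ≤ ε₀² K₁ z` for `0 ≤ z ≤ 1`. -/
def BootstrapData (ε₀ K₀ K₁ : ℝ) (g : ℝ → ℝ) : Prop :=
  ε₀ ∈ Set.Ioo (0:ℝ) 1 ∧ 0 < K₀ ∧ K₀ < K₁ ∧
  ContDiffOn ℝ 2 g (Set.Ici 0) ∧
  (∃ a : ℝ, ∀ z ≥ a, g z = 0) ∧
  gD g 0 = 0 ∧
  (∀ z ≥ (0:ℝ), gD g z ≤ 0) ∧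
  (∀ z ∈ Set.Icc (0:ℝ) 1, ε₀ ^ 2 * K₀ * z ≤ -gD g z ∧ -gD g z ≤ ε₀ ^ 2 * K₁ * z)

/-- The bootstrap property (B) on the time interval `I`:
`φ(x,t) ≤ κ ε(t)` for all `x ∈ [0, l(t)]`, `t ∈ I`, where `ε(t) = φ(0,t)`, `l(t) = ε(t)^β`. -/
def BootstrapB (φ : ℝ → ℝ → ℝ) (κ β : ℝ) (I : Set ℝ) : Prop :=
  ∀ t ∈ I, ∀ x ∈ Set.Icc (0:ℝ) ((φ 0 t) ^ β), φ x t ≤ κ * φ 0 t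

/-! ### Comparison and bounds on `Φ` -/

/-- A function on `[0, T)` whose derivative is nonpositive on `(a, b)` satisfies `f b ≤ f a`. -/
lemma le_of_hasDeriv_nonpos {f f' : ℝ → ℝ} {a b T : ℝ} (ha : 0 ≤ a) (hab : a ≤ b) (hbT : b < T)
    (hf : ∀ t ∈ Ico 0 T, HasDerivWithinAt f (f' t) (Ico 0 T) t)
    (hf' : ∀ t ∈ Ioo a b, f' t ≤ 0) : f b ≤ f a := by
  have hsub : Icc a b ⊆ Ico 0 T := fun x hx => ⟨ha.trans hx.1, hx.2.trans_lt hbT⟩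
  refine antitoneOn_of_hasDerivWithinAt_nonpos (f' := f') (convex_Icc a b)
    (fun t ht => ((hf t (hsub ht)).continuousWithinAt).mono hsub) ?_ ?_
    (left_mem_Icc.2 hab) (right_mem_Icc.2 hab) hab
  · intro t ht
    exact (hf t (hsub (interior_subset ht))).mono (interior_subset.trans hsub)
  · intro t ht
    rw [interior_Icc] at ht
    exact hf' t ht

lemma slice_continuousOn {φ₀ g : ℝ → ℝ} {φ : ℝ → ℝ → ℝ} {I : Set ℝ}
    (hsol : IsFlowMapSolution φ₀ g φ I) {t : ℝ} (ht : t ∈ I) :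
    ContinuousOn (fun x => φ x t) (Ici 0) :=
  hsol.1.continuousOn.comp (f := fun x : ℝ => (x, t)) (by fun_prop) (fun _ hx => ⟨hx, ht⟩)

lemma slice_intervalIntegrable {φ : ℝ → ℝ → ℝ} {t z : ℝ}
    (hc : ContinuousOn (fun x => φ x t) (Ici 0)) (hz : 0 ≤ z) :
    IntervalIntegrable (fun x => φ x t) volume 0 z :=
  (hc.mono (by rw [uIcc_of_le hz]; exact Icc_subset_Ici_self)).intervalIntegrable

lemma mul_le_Phi {φ : ℝ → ℝ → ℝ} {t z m : ℝ}
    (hc : ContinuousOn (fun x => φ x t) (Ici 0)) (hz : 0 ≤ z)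
    (hm : ∀ x ∈ Icc 0 z, m ≤ φ x t) : m * z ≤ Phi φ z t := by
  have := intervalIntegral.integral_mono_on (μ := volume) hz
    (intervalIntegrable_const (c := m)) (slice_intervalIntegrable hc hz) hm
  simp only [intervalIntegral.integral_const, smul_eq_mul] at this
  unfold Phi
  linarith

lemma Phi_le_mul {φ : ℝ → ℝ → ℝ} {t z M : ℝ}
    (hc : ContinuousOn (fun x => φ x t) (Ici 0)) (hz : 0 ≤ z)
    (hM : ∀ x ∈ Icc 0 z, φ x t ≤ M) : Phi φ z t ≤ M * z := by
  have := intervalIntegral.integral_mono_on (μ := volume) hz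
    (slice_intervalIntegrable hc hz) (intervalIntegrable_const (c := M)) hM
  simp only [intervalIntegral.integral_const, smul_eq_mul] at this
  unfold Phi
  linarith

lemma Phi_continuousOn {φ : ℝ → ℝ → ℝ} {t : ℝ}
    (hc : ContinuousOn (fun x => φ x t) (Ici 0)) (b : ℝ) :
    ContinuousOn (fun z => Phi φ z t) (Icc 0 b) := by
  rcases lt_or_ge b 0 with hb | hb
  · rw [Icc_eq_empty (not_le.2 hb)]; exact continuousOn_empty _
  · have := intervalIntegral.continuousOn_primitive_interval'
      (slice_intervalIntegrable hc hb) left_mem_uIcc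
    rwa [uIcc_of_le hb] at this

/-- The kernel `g'/Φ` is integrable on `(0, ∞)`: near `0` the linear growth of `g'` compensates
the vanishing of `Φ(z) ≥ m z`, and far away `g'` vanishes. -/
lemma kernel_integrableOn {ε₀ K₀ K₁ : ℝ} {g : ℝ → ℝ} {φ : ℝ → ℝ → ℝ} {t m : ℝ}
    (hB : BootstrapData ε₀ K₀ K₁ g) (hc : ContinuousOn (fun x => φ x t) (Ici 0))
    (hm : 0 < m) (hφ : ∀ x ≥ (0:ℝ), m ≤ φ x t) :
    IntegrableOn (fun z => gD g z / Phi φ z t) (Ioi 0) := by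
  obtain ⟨-, -, -, hg, ⟨a, ha⟩, -, hneg, hlin⟩ := hB
  have hgc : ContinuousOn (gD g) (Ici 0) :=
    hg.continuousOn_derivWithin (uniqueDiffOn_Ici 0) (by norm_num)
  have hΦ : ∀ z, 0 ≤ z → m * z ≤ Phi φ z t := fun z hz =>
    mul_le_Phi hc hz fun x hx => hφ x hx.1
  set b := max a 1 with hb
  have hb1 : 1 ≤ b := le_max_right _ _
  have hzero : ∀ z ∈ Ioi b, gD g z / Phi φ z t = 0 := by
    intro z hz
    have haz : a < z := (le_max_left _ _).trans_lt hz
    have h0 : gD g z = 0 := by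
      have : g =ᶠ[𝓝[Ici 0] z] fun _ => 0 :=
        mem_nhdsWithin_of_mem_nhds ((lt_mem_nhds haz).mono fun y hy => ha y hy.le)
      unfold gD
      rw [this.derivWithin_eq (ha z haz.le)]
      simp
    rw [h0, zero_div]
  have hcont : ContinuousOn (fun z => gD g z / Phi φ z t) (Ioc 0 b) := by
    refine (hgc.mono fun x hx => hx.1.le).div
      ((Phi_continuousOn hc b).mono Ioc_subset_Icc_self) fun z hz => ?_
    exact ((mul_pos hm hz.1).trans_le (hΦ z hz.1.le)).ne'
  obtain ⟨C, hC⟩ := isCompact_Icc.exists_bound_of_continuousOn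
    (hgc.mono fun x (hx : x ∈ Icc 0 b) => hx.1)
  have h1 : IntegrableOn (fun z => gD g z / Phi φ z t) (Ioc 0 b) := by
    refine IntegrableOn.of_bound (C := max (ε₀ ^ 2 * K₁ / m) (C / m)) (by simp)
      (hcont.aestronglyMeasurable measurableSet_Ioc) ?_
    refine (ae_restrict_iff' measurableSet_Ioc).2 (ae_of_all _ fun z hz => ?_)
    have hmz : 0 < m * z := mul_pos hm hz.1
    rw [norm_div, Real.norm_of_nonneg (hmz.le.trans (hΦ z hz.1.le))]
    rcases le_total z 1 with h | h
    · refine le_trans ?_ (le_max_left _ _)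
      have := (hlin z ⟨hz.1.le, h⟩).2
      rw [Real.norm_of_nonpos (hneg z hz.1.le)]
      calc -gD g z / Phi φ z t ≤ (ε₀ ^ 2 * K₁ * z) / (m * z) := by
            gcongr
            · linarith [hneg z hz.1.le]
            · exact hΦ z hz.1.le
        _ = ε₀ ^ 2 * K₁ / m := by
            have := hz.1.ne'
            field_simp
    · refine le_trans ?_ (le_max_right _ _)
      have hCz := hC z ⟨hz.1.le, hz.2⟩
      have hC0 : 0 ≤ C := (norm_nonneg _).trans hCz
      gcongr
      exact le_trans (by nlinarith) (hΦ z hz.1.le)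
  rw [← Ioc_union_Ioi_eq_Ioi (by linarith : (0:ℝ) ≤ b)]
  exact h1.union (integrableOn_zero.congr_fun (fun z hz => (hzero z hz).symm) measurableSet_Ioi)

/-! ### Monotonicity of solutions -/

/-- The growth rate `∫_x^∞ g'(z)/Φ(z,t) dz` of `log φ(x, ·)` at time `t`. -/
noncomputable def drift (g : ℝ → ℝ) (φ : ℝ → ℝ → ℝ) (x t : ℝ) : ℝ :=
  ∫ z in Ioi x, gD g z / Phi φ z t

/-- A positive solution on `[0, T)` of the flow-map equation with bootstrap data. -/
structure FlowSetting (ε₀ K₀ K₁ T : ℝ) (g : ℝ → ℝ) (φ : ℝ → ℝ → ℝ) : Prop where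
  data : BootstrapData ε₀ K₀ K₁ g
  sol : IsFlowMapSolution (fun _ => ε₀) g φ (Ico 0 T)
  posInf : ∀ T' < T, PosInfOn φ (Icc 0 T')

namespace FlowSetting

variable {ε₀ K₀ K₁ T : ℝ} {g : ℝ → ℝ} {φ : ℝ → ℝ → ℝ}

lemma pos (h : FlowSetting ε₀ K₀ K₁ T g φ) {x t : ℝ} (hx : 0 ≤ x) (ht : t ∈ Ico 0 T) :
    0 < φ x t := by
  obtain ⟨m, hm, hφ⟩ := h.posInf t ht.2
  exact hm.trans_le (hφ x hx t ⟨ht.1, le_rfl⟩)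

lemma slice_cont (h : FlowSetting ε₀ K₀ K₁ T g φ) {t : ℝ} (ht : t ∈ Ico 0 T) :
    ContinuousOn (fun x => φ x t) (Ici 0) :=
  slice_continuousOn h.sol ht

lemma kernel_int (h : FlowSetting ε₀ K₀ K₁ T g φ) {t : ℝ} (ht : t ∈ Ico 0 T) :
    IntegrableOn (fun z => gD g z / Phi φ z t) (Ioi 0) := by
  obtain ⟨m, hm, hφ⟩ := h.posInf t ht.2
  exact kernel_integrableOn h.data (h.slice_cont ht) hm fun x hx => hφ x hx t ⟨ht.1, le_rfl⟩

lemma Phi_nonneg (h : FlowSetting ε₀ K₀ K₁ T g φ) {z t : ℝ} (hz : 0 ≤ z) (ht : t ∈ Ico 0 T) :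
    0 ≤ Phi φ z t := by
  simpa using mul_le_Phi (m := 0) (h.slice_cont ht) hz fun x hx => (h.pos hx.1 ht).le

lemma kernel_nonpos (h : FlowSetting ε₀ K₀ K₁ T g φ) {z t : ℝ} (hz : 0 ≤ z)
    (ht : t ∈ Ico 0 T) : gD g z / Phi φ z t ≤ 0 :=
  div_nonpos_of_nonpos_of_nonneg (h.data.2.2.2.2.2.2.1 z hz) (h.Phi_nonneg hz ht)

lemma drift_nonpos (h : FlowSetting ε₀ K₀ K₁ T g φ) {x t : ℝ} (hx : 0 ≤ x)
    (ht : t ∈ Ico 0 T) : drift g φ x t ≤ 0 :=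
  setIntegral_nonpos measurableSet_Ioi fun _ hz => h.kernel_nonpos (hx.trans (le_of_lt hz)) ht

lemma drift_sub (h : FlowSetting ε₀ K₀ K₁ T g φ) {x y t : ℝ} (hx : 0 ≤ x) (hxy : x ≤ y)
    (ht : t ∈ Ico 0 T) :
    drift g φ x t - drift g φ y t = ∫ z in x..y, gD g z / Phi φ z t :=
  intervalIntegral.integral_Ioi_sub_Ioi ((h.kernel_int ht).mono_set (Ioi_subset_Ioi hx)) hxy

lemma drift_mono (h : FlowSetting ε₀ K₀ K₁ T g φ) {x y t : ℝ} (hx : 0 ≤ x) (hxy : x ≤ y)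
    (ht : t ∈ Ico 0 T) : drift g φ x t ≤ drift g φ y t := by
  have h1 := h.drift_sub hx hxy ht
  have h2 : ∫ z in x..y, gD g z / Phi φ z t ≤ 0 := by
    rw [intervalIntegral.integral_of_le hxy]
    exact setIntegral_nonpos measurableSet_Ioc fun z hz =>
      h.kernel_nonpos (hx.trans hz.1.le) ht
  linarith

lemma hasDeriv (h : FlowSetting ε₀ K₀ K₁ T g φ) {x t : ℝ} (hx : 0 ≤ x) (ht : t ∈ Ico 0 T) :
    HasDerivWithinAt (fun s => φ x s) (φ x t * drift g φ x t) (Ico 0 T) t :=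
  h.sol.2.2 x hx t ht

lemma hasDeriv_log (h : FlowSetting ε₀ K₀ K₁ T g φ) {x t : ℝ} (hx : 0 ≤ x)
    (ht : t ∈ Ico 0 T) :
    HasDerivWithinAt (fun s => Real.log (φ x s)) (drift g φ x t) (Ico 0 T) t := by
  have hp := (h.pos hx ht).ne'
  convert (h.hasDeriv hx ht).log hp using 1
  field_simp

lemma hasDeriv_rpow (h : FlowSetting ε₀ K₀ K₁ T g φ) (p : ℝ) {t : ℝ} (ht : t ∈ Ico 0 T) :
    HasDerivWithinAt (fun s => (φ 0 s) ^ p) (p * drift g φ 0 t * (φ 0 t) ^ p) (Ico 0 T) t := by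
  have hp := h.pos le_rfl ht
  convert (h.hasDeriv le_rfl ht).rpow_const (p := p) (Or.inl hp.ne') using 1
  rw [Real.rpow_sub_one hp.ne']
  field_simp

lemma anti_time (h : FlowSetting ε₀ K₀ K₁ T g φ) {x s t : ℝ} (hx : 0 ≤ x) (hs : 0 ≤ s)
    (hst : s ≤ t) (ht : t < T) : φ x t ≤ φ x s :=
  le_of_hasDeriv_nonpos hs hst ht (fun _ hr => h.hasDeriv hx hr) fun r hr =>
    have hr' : r ∈ Ico 0 T := ⟨hs.trans hr.1.le, hr.2.trans ht⟩
    mul_nonpos_of_nonneg_of_nonpos (h.pos hx hr').le (h.drift_nonpos hx hr')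

lemma le_init (h : FlowSetting ε₀ K₀ K₁ T g φ) {x t : ℝ} (hx : 0 ≤ x) (ht : t ∈ Ico 0 T) :
    φ x t ≤ ε₀ :=
  (h.anti_time hx le_rfl ht.1 ht.2).trans_eq (h.sol.2.1 x hx)

/-- Solutions starting from a constant stay nondecreasing in space, because the growth rate
is nondecreasing in space. -/
lemma mono_space (h : FlowSetting ε₀ K₀ K₁ T g φ) {x y t : ℝ} (hx : 0 ≤ x) (hxy : x ≤ y)
    (ht : t ∈ Ico 0 T) : φ x t ≤ φ y t := by
  have hy := hx.trans hxy
  have h0 : (0:ℝ) ∈ Ico 0 T := ⟨le_rfl, ht.1.trans_lt ht.2⟩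
  have := le_of_hasDeriv_nonpos (f := fun s => Real.log (φ x s) - Real.log (φ y s))
    le_rfl ht.1 ht.2 (fun r hr => (h.hasDeriv_log hx hr).sub (h.hasDeriv_log hy hr))
    fun r hr => sub_nonpos.2 (h.drift_mono hx hxy ⟨hr.1.le, hr.2.trans ht.2⟩)
  simp only [h.sol.2.1 x hx, h.sol.2.1 y hy, sub_self, sub_nonpos] at this
  exact (Real.log_le_log_iff (h.pos hx ht) (h.pos hy ht)).1 this

/-! ### Growth-rate estimates -/

/-- Since `Φ(z,t) ≥ z ε(t)`, the growth rates at `0` and at `x ≤ 1` differ by at most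
`ε₀² K₁ x / ε(t)`. -/
lemma drift_sub_le (h : FlowSetting ε₀ K₀ K₁ T g φ) {x t : ℝ} (hx : 0 ≤ x) (hx1 : x ≤ 1)
    (ht : t ∈ Ico 0 T) : drift g φ x t - drift g φ 0 t ≤ ε₀ ^ 2 * K₁ * x / φ 0 t := by
  have hε := h.pos le_rfl ht
  have h1 := h.drift_sub le_rfl hx ht
  have h2 : ∫ _ in (0:ℝ)..x, -(ε₀ ^ 2 * K₁ / φ 0 t) ≤ ∫ z in (0:ℝ)..x, gD g z / Phi φ z t := by
    refine intervalIntegral.integral_mono_on_of_le_Ioo hx intervalIntegrable_const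
      ((intervalIntegrable_iff_integrableOn_Ioc_of_le hx).2
        ((h.kernel_int ht).mono_set Ioc_subset_Ioi_self)) fun z hz => ?_
    have hz0 := hz.1
    have hΦ : φ 0 t * z ≤ Phi φ z t :=
      mul_le_Phi (h.slice_cont ht) hz0.le fun y hy => h.mono_space le_rfl hy.1 ht
    have hΦ0 : 0 < Phi φ z t := (mul_pos hε hz0).trans_le hΦ
    have hg := (h.data.2.2.2.2.2.2.2 z ⟨hz0.le, hz.2.le.trans hx1⟩).2
    have hg0 := h.data.2.2.2.2.2.2.1 z hz0.le
    rw [neg_le, ← neg_div]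
    calc -gD g z / Phi φ z t ≤ (ε₀ ^ 2 * K₁ * z) / (φ 0 t * z) := by
          gcongr
          linarith
      _ = ε₀ ^ 2 * K₁ / φ 0 t := by field_simp
  rw [intervalIntegral.integral_const, smul_eq_mul] at h2
  have h3 : ε₀ ^ 2 * K₁ * x / φ 0 t = (x - 0) * (ε₀ ^ 2 * K₁ / φ 0 t) := by ring
  rw [h3]
  linarith

lemma rpow_cont (h : FlowSetting ε₀ K₀ K₁ T g φ) (p : ℝ) :
    ContinuousOn (fun s => (φ 0 s) ^ p) (Ico 0 T) :=
  fun _ ht => (h.hasDeriv_rpow p ht).continuousWithinAt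

/-- Under the bootstrap property up to time `t`, a point `z ≥ l(t)` has `l(s) = z` for some
`s ≤ t` unless `z > l(0)`, so that `φ(z,t) ≤ φ(z,s) ≤ κ ε(s) = κ z^{1/β}`. -/
lemma envelope (h : FlowSetting ε₀ K₀ K₁ T g φ) {β κ z t : ℝ} (hβ : β ∈ Ioo (0:ℝ) 1)
    (hκ : 1 < κ) (ht : t ∈ Ico 0 T)
    (hF : ∀ s ∈ Icc 0 t, φ ((φ 0 s) ^ β) s ≤ κ * φ 0 s) (hz : (φ 0 t) ^ β ≤ z) :
    φ z t ≤ κ * z ^ (1 / β) := by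
  have hε := h.pos le_rfl ht
  have hz0 : 0 ≤ z := (Real.rpow_nonneg hε.le _).trans hz
  have hε₀ : 0 < ε₀ := h.data.1.1
  have hβ0 : β ≠ 0 := hβ.1.ne'
  rcases le_total (ε₀ ^ β) z with hz' | hz'
  · have h1 : ε₀ ≤ z ^ (1 / β) := by
      have := Real.rpow_le_rpow (Real.rpow_nonneg hε₀.le _) hz' (one_div_nonneg.2 hβ.1.le)
      rwa [← Real.rpow_mul hε₀.le, mul_one_div_cancel hβ0, Real.rpow_one] at this
    have := h.le_init hz0 ht
    nlinarith
  · have hc : ContinuousOn (fun s => (φ 0 s) ^ β) (Icc 0 t) :=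
      (h.rpow_cont β).mono fun s hs => ⟨hs.1, hs.2.trans_lt ht.2⟩
    have h0 : φ 0 0 = ε₀ := h.sol.2.1 0 le_rfl
    obtain ⟨s, hs, hsz⟩ := intermediate_value_Icc' ht.1 hc ⟨hz, by simpa only [h0] using hz'⟩
    have hs' : s ∈ Ico 0 T := ⟨hs.1, hs.2.trans_lt ht.2⟩
    have h1 := hF s hs
    simp only at hsz
    rw [hsz] at h1
    refine (h.anti_time hz0 hs.1 hs.2 ht.2).trans (h1.trans_eq ?_)
    rw [← hsz, ← Real.rpow_mul (h.pos le_rfl hs').le, mul_one_div_cancel hβ0, Real.rpow_one]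

/-- Under the bootstrap property, the growth rate of `ε` is at most `-A ε^{β-1}`: the envelope
gives `Φ(z,t) ≤ κ z^{1+1/β}` on `[l(t), 1]`, and `∫_{l(t)}^1 z^{-1/β} dz` is explicit. -/
lemma drift_le (h : FlowSetting ε₀ K₀ K₁ T g φ) {β κ t : ℝ} (hβ : β ∈ Ioo (0:ℝ) 1)
    (hκ : 1 < κ) (hcond2 : ε₀ ^ (1 - β) ≤ 1 / 2) (ht : t ∈ Ico 0 T)
    (hF : ∀ s ∈ Icc 0 t, φ ((φ 0 s) ^ β) s ≤ κ * φ 0 s) :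
    drift g φ 0 t ≤ -(ε₀ ^ 2 * K₀ * cBeta β / (2 * κ)) * (φ 0 t) ^ (β - 1) := by
  have hε := h.pos le_rfl ht
  obtain ⟨⟨hε₀, hε₁⟩, hK₀, -⟩ := h.data
  obtain ⟨hβ0, hβ1⟩ := hβ
  have hκ0 : 0 < κ := by linarith
  set l := (φ 0 t) ^ β with hl
  have hl0 : 0 < l := Real.rpow_pos_of_pos hε _
  have hl1 : l ≤ 1 := Real.rpow_le_one hε.le ((h.le_init le_rfl ht).trans hε₁.le) hβ0.le
  have h1 : drift g φ 0 t ≤ ∫ z in l..1, gD g z / Phi φ z t := by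
    rw [← h.drift_sub hl0.le hl1 ht]
    have := h.drift_nonpos zero_le_one ht
    have := h.drift_mono le_rfl hl0.le ht
    linarith
  have h2 : ∫ z in l..1, gD g z / Phi φ z t ≤
      ∫ z in l..1, -(ε₀ ^ 2 * K₀ / κ) * z ^ (-(1 / β)) := by
    refine intervalIntegral.integral_mono_on hl1
      ((intervalIntegrable_iff_integrableOn_Ioc_of_le hl1).2
        ((h.kernel_int ht).mono_set fun z hz => hl0.trans hz.1))
      ((intervalIntegral.intervalIntegrable_rpow (Or.inr ?_)).const_mul _) fun z hz => ?_
    · rw [uIcc_of_le hl1]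
      exact fun hh => absurd hh.1 (not_le.2 hl0)
    have hz0 : 0 < z := hl0.trans_le hz.1
    have hΦ : Phi φ z t ≤ κ * z ^ (1 / β) * z :=
      Phi_le_mul (h.slice_cont ht) hz0.le fun y hy => (h.mono_space hy.1 hy.2 ht).trans
        (h.envelope ⟨hβ0, hβ1⟩ hκ ht hF hz.1)
    have hΦ0 : 0 < Phi φ z t := (mul_pos hε hz0).trans_le
      (mul_le_Phi (h.slice_cont ht) hz0.le fun y hy => h.mono_space le_rfl hy.1 ht)
    have hg := (h.data.2.2.2.2.2.2.2 z ⟨hz0.le, hz.2⟩).1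
    rw [← neg_le_neg_iff, ← neg_div (Phi φ z t)]
    have hzp : 0 < z ^ (1 / β) := Real.rpow_pos_of_pos hz0 _
    calc -(-(ε₀ ^ 2 * K₀ / κ) * z ^ (-(1 / β)))
        = (ε₀ ^ 2 * K₀ * z) / (κ * z ^ (1 / β) * z) := by
          rw [Real.rpow_neg hz0.le]
          field_simp
      _ ≤ -gD g z / Phi φ z t := by
          gcongr
          exact le_trans (by positivity) hg
  have hr : -(1 / β) + 1 = -((1 - β) / β) := by field_simp; ring
  have h3 : ∫ z in l..1, z ^ (-(1 / β)) = (β / (1 - β)) * ((φ 0 t) ^ (β - 1) - 1) := by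
    rw [integral_rpow (Or.inr ⟨?_, ?_⟩), hr, Real.one_rpow, hl, ← Real.rpow_mul hε.le]
    · have : β * -((1 - β) / β) = β - 1 := by field_simp; ring
      rw [this]
      have : 1 - β ≠ 0 := by linarith
      field_simp
      ring
    · have : 1 < 1 / β := by rw [lt_div_iff₀ hβ0]; linarith
      linarith
    · rw [uIcc_of_le hl1]
      exact fun hh => absurd hh.1 (not_le.2 hl0)
  rw [intervalIntegral.integral_const_mul, h3] at h2
  have hE : 2 ≤ (φ 0 t) ^ (β - 1) := by
    have h4 : (φ 0 t) ^ (1 - β) ≤ 1 / 2 :=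
      (Real.rpow_le_rpow hε.le (h.le_init le_rfl ht) (by linarith)).trans hcond2
    have h5 : (φ 0 t) ^ (β - 1) = ((φ 0 t) ^ (1 - β))⁻¹ := by
      rw [← Real.rpow_neg hε.le]; congr 1; ring
    rw [h5]
    have h6 : 0 < (φ 0 t) ^ (1 - β) := Real.rpow_pos_of_pos hε _
    rw [le_inv_comm₀ (by norm_num) h6]
    linarith
  set E := (φ 0 t) ^ (β - 1)
  have hc : cBeta β ≤ β / (1 - β) := by
    unfold cBeta
    have : 0 < 1 - β := by linarith
    rw [div_le_div_iff₀ (by positivity) this]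
    nlinarith [mul_pos hβ0 this, mul_pos (mul_pos hβ0 this) hβ0]
  have hc0 : 0 < β / (1 - β) := div_pos hβ0 (by linarith)
  have h7 : cBeta β * E / 2 ≤ β / (1 - β) * (E - 1) := by nlinarith
  have h8 : 0 ≤ ε₀ ^ 2 * K₀ / κ := by positivity
  have h9 := mul_le_mul_of_nonneg_left h7 h8
  have h10 : -(ε₀ ^ 2 * K₀ * cBeta β / (2 * κ)) * E
      = -(ε₀ ^ 2 * K₀ / κ * (cBeta β * E / 2)) := by ring
  rw [h10]
  linarith

/-! ### The bootstrap argument -/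

/-- The bootstrap property holds on all of `[0, T)`; by monotonicity in space it is stated at
the endpoint `l(t) = ε(t)^β` only. At a first time `t₁` of failure, the function
`log φ(x,t) - log ε(t) - c x ε(t)^{-β}` with `x = l(t₁)` and `c = ε₀² K₁ / (A β)` has been
nonincreasing on `[0, t₁]`, so `log (φ(x,t₁)/ε(t₁)) ≤ c < log κ`. -/
lemma bootstrap (h : FlowSetting ε₀ K₀ K₁ T g φ) {β κ : ℝ} (hβ : β ∈ Ioo (0:ℝ) 1)
    (hκ : 1 < κ) (hcond2 : ε₀ ^ (1 - β) ≤ 1 / 2)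
    (hcond3 : 2 * K₁ / (K₀ * cBeta β * β) < Real.log κ / κ) {t : ℝ} (ht : t ∈ Ico 0 T) :
    φ ((φ 0 t) ^ β) t < κ * φ 0 t := by
  by_contra! hcon
  obtain ⟨⟨hε₀, hε₁⟩, hK₀, hK₁, -⟩ := h.data
  have hκ0 : 0 < κ := by linarith
  have hsub : Icc 0 t ⊆ Ico 0 T := fun s hs => ⟨hs.1, hs.2.trans_lt ht.2⟩
  have hcF : ContinuousOn (fun s => φ ((φ 0 s) ^ β) s - κ * φ 0 s) (Icc 0 t) := by
    refine ContinuousOn.mono (s := Ico 0 T) ?_ hsub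
    refine ContinuousOn.sub ?_ (continuousOn_const.mul fun s hs =>
      (h.hasDeriv le_rfl hs).continuousWithinAt)
    exact h.sol.1.continuousOn.comp (f := fun s => ((φ 0 s) ^ β, s))
      ((h.rpow_cont β).prodMk continuousOn_id)
      fun s hs => ⟨Real.rpow_nonneg (h.pos le_rfl hs).le _, hs⟩
  have hcomp : IsCompact (Icc 0 t ∩ (fun s => φ ((φ 0 s) ^ β) s - κ * φ 0 s) ⁻¹' Ici 0) :=
    isCompact_Icc.of_isClosed_subset (hcF.preimage_isClosed_of_isClosed isClosed_Icc isClosed_Ici)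
      inter_subset_left
  obtain ⟨t₁, ⟨ht₁, hFt₁⟩, hmin⟩ := hcomp.exists_isLeast
    ⟨t, right_mem_Icc.2 ht.1, sub_nonneg.2 hcon⟩
  have hbefore : ∀ s ∈ Ico 0 t₁, φ ((φ 0 s) ^ β) s ≤ κ * φ 0 s := by
    intro s hs
    by_contra! hs'
    exact absurd (hmin ⟨⟨hs.1, hs.2.le.trans ht₁.2⟩, sub_nonneg.2 hs'.le⟩) (not_le.2 hs.2)
  have ht₁' := hsub ht₁
  have hε := h.pos le_rfl ht₁'
  set x := (φ 0 t₁) ^ β with hx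
  have hx0 : 0 < x := Real.rpow_pos_of_pos hε _
  have hx1 : x ≤ 1 := Real.rpow_le_one hε.le ((h.le_init le_rfl ht₁').trans hε₁.le) hβ.1.le
  have hcβ : 0 < cBeta β := by
    unfold cBeta
    have := hβ.1
    have : 0 < 1 - β := by linarith [hβ.2]
    positivity
  have hβ0 := hβ.1
  set A := ε₀ ^ 2 * K₀ * cBeta β / (2 * κ) with hA
  have hA0 : 0 < A := by positivity
  set c := ε₀ ^ 2 * K₁ / (A * β) with hc
  have hK₁0 : 0 < K₁ := hK₀.trans hK₁
  have hc0 : 0 < c := by positivity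
  have hcκ : c < Real.log κ := by
    have : c = κ * (2 * K₁ / (K₀ * cBeta β * β)) := by
      rw [hc, hA]
      field_simp
    rw [this]
    rwa [lt_div_iff₀' hκ0] at hcond3
  have key := le_of_hasDeriv_nonpos
    (f := fun s => Real.log (φ x s) - Real.log (φ 0 s) - c * x * (φ 0 s) ^ (-β))
    le_rfl ht₁.1 ht₁'.2
    (fun r hr => ((h.hasDeriv_log hx0.le hr).sub (h.hasDeriv_log le_rfl hr)).sub
      ((h.hasDeriv_rpow (-β) hr).const_mul (c * x)))
    (by
      intro r hr
      have hr' : r ∈ Ico 0 T := ⟨hr.1.le, hr.2.trans ht₁'.2⟩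
      have h1 := h.drift_sub_le hx0.le hx1 hr'
      have h2 := h.drift_le hβ hκ hcond2 hr'
        fun s hs => hbefore s ⟨hs.1, hs.2.trans_lt hr.2⟩
      have hεr := h.pos le_rfl hr'
      have hp : 0 < (φ 0 r) ^ (-β) := Real.rpow_pos_of_pos hεr _
      have h3 : (φ 0 r) ^ (-β) * (φ 0 r) ^ (β - 1) = (φ 0 r)⁻¹ := by
        rw [← Real.rpow_add hεr, ← Real.rpow_neg_one]; congr 1; ring
      have h4 : c * x * β * (φ 0 r) ^ (-β) * drift g φ 0 r ≤
          c * x * β * (φ 0 r) ^ (-β) * (-A * (φ 0 r) ^ (β - 1)) :=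
        mul_le_mul_of_nonneg_left h2 (by positivity)
      have h5 : c * x * β * (φ 0 r) ^ (-β) * (-A * (φ 0 r) ^ (β - 1))
          = -(ε₀ ^ 2 * K₁ * x / φ 0 r) := by
        calc _ = -(c * (A * β)) * x * ((φ 0 r) ^ (-β) * (φ 0 r) ^ (β - 1)) := by ring
          _ = _ := by
            rw [h3, hc, div_mul_cancel₀ _ (by positivity)]
            ring
      linarith)
  have hcx : c * x * (φ 0 t₁) ^ (-β) = c := by
    rw [mul_assoc, hx, ← Real.rpow_add hε, add_neg_cancel, Real.rpow_zero, mul_one]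
  have h0 : 0 ≤ c * x * ε₀ ^ (-β) := by positivity
  simp only [h.sol.2.1 x hx0.le, h.sol.2.1 0 le_rfl, hcx] at key
  have hlog : Real.log (κ * φ 0 t₁) ≤ Real.log (φ x t₁) :=
    Real.log_le_log (mul_pos hκ0 hε) (sub_nonneg.1 hFt₁)
  rw [Real.log_mul hκ0.ne' hε.ne'] at hlog
  linarith

end FlowSetting

/-! ### Blowup in finite time -/

/-- blowup in finite time: in the bootstrap setup, under the three
conditions `ε₀ ≤ κ ε₀^{1/β}`, `ε₀^{1−β} ≤ 1/2` and `2K₁/(K₀ c_β β) < log κ / κ`, every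
solution on `[0,T)` satisfies `ε'(t) ≤ −(ε₀² K₀ c_β/(2κ)) ε(t)^β`; consequently `T` is
finite with `T ≤ 2κ/((1−β) K₀ c_β ε₀^{1+β})`. -/
theorem statement12 (ε₀ K₀ K₁ β κ T : ℝ) (g : ℝ → ℝ) (φ : ℝ → ℝ → ℝ)
    (hB : BootstrapData ε₀ K₀ K₁ g)
    (hβ : β ∈ Set.Ioo (0:ℝ) 1) (hκ : 1 < κ)
    (hcond1 : ε₀ ≤ κ * ε₀ ^ (1 / β))
    (hcond2 : ε₀ ^ (1 - β) ≤ 1 / 2)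
    (hcond3 : 2 * K₁ / (K₀ * cBeta β * β) < Real.log κ / κ)
    (hT : 0 < T)
    (hsol : IsFlowMapSolution (fun _ => ε₀) g φ (Set.Ico 0 T))
    (hinf : ∀ T' < T, PosInfOn φ (Set.Icc 0 T')) :
    (∀ t ∈ Set.Ico (0:ℝ) T,
      derivWithin (fun s => φ 0 s) (Set.Ico 0 T) t ≤
        -(ε₀ ^ 2 * K₀ * cBeta β / (2 * κ)) * (φ 0 t) ^ β) ∧
    T ≤ 2 * κ / ((1 - β) * K₀ * cBeta β * ε₀ ^ (1 + β)) := by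
  have h : FlowSetting ε₀ K₀ K₁ T g φ := ⟨hB, hsol, hinf⟩
  obtain ⟨⟨hε₀, hε₁⟩, hK₀, hK₁, -⟩ := hB
  have hβ0 := hβ.1
  have hβ1 : 0 < 1 - β := sub_pos.2 hβ.2
  have hκ0 : 0 < κ := by linarith
  have hcβ : 0 < cBeta β := by
    unfold cBeta
    positivity
  have hdrift : ∀ t ∈ Ico (0:ℝ) T,
      drift g φ 0 t ≤ -(ε₀ ^ 2 * K₀ * cBeta β / (2 * κ)) * (φ 0 t) ^ (β - 1) := fun t ht =>
    h.drift_le hβ hκ hcond2 ht fun s hs =>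
      (h.bootstrap hβ hκ hcond2 hcond3 ⟨hs.1, hs.2.trans_lt ht.2⟩).le
  set A := ε₀ ^ 2 * K₀ * cBeta β / (2 * κ) with hA
  have hA0 : 0 < A := by positivity
  refine ⟨fun t ht => ?_, ?_⟩
  · have hε := h.pos le_rfl ht
    rw [(h.hasDeriv le_rfl ht).derivWithin (uniqueDiffOn_Ico 0 T t ht)]
    calc φ 0 t * drift g φ 0 t ≤ φ 0 t * (-A * (φ 0 t) ^ (β - 1)) :=
          mul_le_mul_of_nonneg_left (hdrift t ht) hε.le
      _ = -A * (φ 0 t) ^ β := by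
          rw [Real.rpow_sub_one hε.ne']
          field_simp
  · have hbound : 2 * κ / ((1 - β) * K₀ * cBeta β * ε₀ ^ (1 + β))
        = ε₀ ^ (1 - β) / ((1 - β) * A) := by
      have h1 : ε₀ ^ (1 + β) * ε₀ ^ (1 - β) = ε₀ ^ 2 := by
        rw [← Real.rpow_add hε₀, ← Real.rpow_natCast]
        congr 1
        push_cast
        ring
      have h2 : 0 < ε₀ ^ (1 + β) := Real.rpow_pos_of_pos hε₀ _
      rw [div_eq_div_iff (by positivity) (by positivity), hA]
      field_simp
      linear_combination (-1 : ℝ) * h1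
    rw [hbound]
    refine le_of_forall_lt_imp_le_of_dense fun t htT => ?_
    rcases lt_or_ge t 0 with ht0 | ht0
    · exact ht0.le.trans (by positivity)
    have ht : t ∈ Ico 0 T := ⟨ht0, htT⟩
    have key := le_of_hasDeriv_nonpos (f := fun s => (φ 0 s) ^ (1 - β) + (1 - β) * A * s)
      le_rfl ht0 htT
      (fun r hr => (h.hasDeriv_rpow (1 - β) hr).add
        ((hasDerivWithinAt_id r _).const_mul ((1 - β) * A)))
      (by
        intro r hr
        have hr' : r ∈ Ico 0 T := ⟨hr.1.le, hr.2.trans htT⟩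
        have hεr := h.pos le_rfl hr'
        have hp : 0 < (φ 0 r) ^ (1 - β) := Real.rpow_pos_of_pos hεr _
        have h3 : (φ 0 r) ^ (1 - β) * (φ 0 r) ^ (β - 1) = 1 := by
          rw [← Real.rpow_add hεr]
          simp
        have h4 := mul_le_mul_of_nonneg_left (hdrift r hr') (mul_pos hβ1 hp).le
        have h5 : (1 - β) * (φ 0 r) ^ (1 - β) * (-A * (φ 0 r) ^ (β - 1)) = -((1 - β) * A) := by
          linear_combination (-(1 - β) * A) * h3
        linarith)
    simp only [hsol.2.1 0 le_rfl, mul_zero, add_zero] at key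
    rw [le_div_iff₀ (by positivity)]
    have := Real.rpow_pos_of_pos (h.pos le_rfl ht) (1 - β)
    linarith
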